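/- Define Λ(x) := 1/(2Ψ(x+1) − ln(x(x+1))) − 3x(x+1) for real x > 0, where Ψ is the digamma function. Then the derivative Λ'(x) is positive for all x > 28. -/

import Mathlib

open Real

/-- The digamma function `Ψ(x) = Γ'(x)/Γ(x) = (log ∘ Γ)'(x)`. -/
noncomputable def digamma (x : ℝ) : ℝ := deriv (fun y : ℝ => Real.log (Real.Gamma y)) x

/-- `Λ(x) = 1/(2Ψ(x+1) − ln(x(x+1))) − 3x(x+1)`. -/
noncomputable def lodgeLambda (x : ℝ) : ℝ :=
  1 / (2 * digamma (x + 1) - Real.log (x * (x + 1))) - 3 * x * (x + 1)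

open Filter Topology

/-- `F(x) = 2Ψ(x+1) − ln(x(x+1))`. -/
noncomputable def lodF (x : ℝ) : ℝ := 2 * digamma (x + 1) - Real.log (x * (x + 1))

/-- The increment `F(x) - F(x+1)`. -/
noncomputable def lodG (x : ℝ) : ℝ := Real.log (x + 2) - Real.log x - 2 / (x + 1)

noncomputable def lodK (x : ℝ) : ℝ := 2 / (x * (x + 1) ^ 2 * (x + 2))

noncomputable def lodV (c x : ℝ) : ℝ :=
  (2 * x + 1) * (1 / 3 / (x * (x + 1)) ^ 2 - 2 / 15 / (x * (x + 1)) ^ 3 + c / (x * (x + 1)) ^ 4)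

noncomputable def lodU (x : ℝ) : ℝ :=
  1 / 3 / (x * (x + 1)) - 1 / 15 / (x * (x + 1)) ^ 2 + 8 / 315 / (x * (x + 1)) ^ 3

lemma diff_logGamma {x : ℝ} (hx : 0 < x) :
    DifferentiableAt ℝ (fun y : ℝ => Real.log (Real.Gamma y)) x := by
  apply DifferentiableAt.log
  · apply Real.differentiableAt_Gamma
    intro m h
    have : (0 : ℝ) ≤ m := Nat.cast_nonneg m
    linarith
  · exact (Real.Gamma_pos_of_pos hx).ne'

lemma digamma_succ {x : ℝ} (hx : 0 < x) : digamma (x + 1) = digamma x + 1 / x := by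
  unfold digamma
  rw [← deriv_comp_add_const]
  have : (fun y : ℝ => Real.log (Real.Gamma (y + 1))) =ᶠ[𝓝 x]
      fun y => Real.log (Real.Gamma y) + Real.log y := by
    filter_upwards [lt_mem_nhds hx] with y hy
    rw [Real.Gamma_add_one hy.ne', Real.log_mul hy.ne' (Real.Gamma_pos_of_pos hy).ne', add_comm]
  rw [this.deriv_eq, deriv_fun_add (diff_logGamma hx) (Real.differentiableAt_log hx.ne'),
    Real.deriv_log, one_div]

lemma slope_lg {x : ℝ} (hx : 0 < x) : slope (Real.log ∘ Real.Gamma) x (x + 1) = Real.log x := by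
  rw [slope_def_field]
  simp only [Function.comp]
  rw [Real.Gamma_add_one hx.ne', Real.log_mul hx.ne' (Real.Gamma_pos_of_pos hx).ne']
  simp

lemma digamma_le {x : ℝ} (hx : 0 < x) : digamma x ≤ Real.log x := by
  have := Real.convexOn_log_Gamma.deriv_le_slope (x := x) (y := x + 1) hx
    (by simp; linarith) (by linarith) (diff_logGamma hx)
  rwa [slope_lg hx] at this

lemma le_digamma {x : ℝ} (hx : 0 < x) : Real.log x ≤ digamma (x + 1) := by
  have := Real.convexOn_log_Gamma.slope_le_deriv (x := x) (y := x + 1) hx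
    (by simp; linarith) (by linarith) (diff_logGamma (by linarith))
  rwa [slope_lg hx] at this

lemma lodF_tendsto : Tendsto lodF atTop (𝓝 0) := by
  have h := Real.tendsto_log_comp_add_sub_log 1
  have h' := h.neg
  rw [neg_zero] at h'
  refine tendsto_of_tendsto_of_tendsto_of_le_of_le' h' h ?_ ?_
  · filter_upwards [eventually_gt_atTop 0] with x hx
    have := le_digamma hx
    unfold lodF
    rw [Real.log_mul hx.ne' (by positivity)]
    linarith
  · filter_upwards [eventually_gt_atTop 0] with x hx
    have := digamma_le (x := x + 1) (by positivity)
    unfold lodF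
    rw [Real.log_mul hx.ne' (by positivity)]
    linarith

lemma lodF_succ {x : ℝ} (hx : 0 < x) : lodF x - lodF (x + 1) = lodG x := by
  unfold lodF lodG
  rw [digamma_succ (x := x + 1) (by positivity), Real.log_mul hx.ne' (by positivity),
    Real.log_mul (by positivity) (by positivity), show x + 1 + 1 = x + 2 by ring]
  ring

lemma lodG_nonneg {x : ℝ} (hx : 0 < x) : 0 ≤ lodG x := by
  have h := Real.hasSum_log_one_add_inv (a := x / 2) (by positivity)
  have h2 := le_hasSum h 0 (fun j _ => by positivity)
  have e : 1 + (x / 2)⁻¹ = (x + 2) / x := by field_simp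
  rw [e, Real.log_div (by positivity) (by positivity)] at h2
  simp only [CharP.cast_eq_zero, mul_zero, zero_add, pow_one, div_one, mul_one] at h2
  unfold lodG
  have : 2 * (1 / (2 * (x / 2) + 1)) = 2 / (x + 1) := by field_simp
  linarith

lemma sum_tele (f : ℝ → ℝ) (x : ℝ) (N : ℕ) :
    ∑ n ∈ Finset.range N, (f (x + n) - f (x + n + 1)) = f x - f (x + N) := by
  have := Finset.sum_range_sub' (fun n : ℕ => f (x + n)) N
  simp only [Nat.cast_zero, add_zero] at this
  rw [← this]
  refine Finset.sum_congr rfl fun n _ => ?_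
  push_cast
  rw [add_assoc]

lemma tendsto_shift {f : ℝ → ℝ} (hf : Tendsto f atTop (𝓝 0)) (x : ℝ) :
    Tendsto (fun N : ℕ => f x - f (x + N)) atTop (𝓝 (f x)) := by
  have : Tendsto (fun N : ℕ => f (x + N)) atTop (𝓝 0) :=
    hf.comp (tendsto_atTop_add_const_left _ _ tendsto_natCast_atTop_atTop)
  simpa using this.const_sub (f x)

lemma lodF_hasSum {x : ℝ} (hx : 0 < x) : HasSum (fun n : ℕ => lodG (x + n)) (lodF x) := by
  rw [hasSum_iff_tendsto_nat_of_nonneg (fun n => lodG_nonneg (by positivity))]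
  refine (tendsto_shift lodF_tendsto x).congr fun N => ?_
  rw [← sum_tele]
  exact Finset.sum_congr rfl fun n _ => lodF_succ (by positivity)

lemma lodG_deriv {x : ℝ} (hx : 0 < x) : HasDerivAt lodG (-lodK x) x := by
  have h1 := ((hasDerivAt_id x).add_const 2).log (by simp; positivity)
  have h2 := Real.hasDerivAt_log hx.ne'
  have h3 := (hasDerivAt_const x (2 : ℝ)).div ((hasDerivAt_id x).add_const 1) (by simp; positivity)
  refine ((h1.sub h2).sub h3).congr_deriv ?_
  unfold lodK
  simp only [id]
  field_simp
  ring

lemma lodK_bound (n : ℕ) {y : ℝ} (hy : 1 < y) : ‖-lodK (y + n)‖ ≤ 2 * (1 / ((n : ℝ) + 1) ^ 2) := by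
  have hn : (0 : ℝ) ≤ n := Nat.cast_nonneg n
  have : 0 < y + n := by positivity
  rw [norm_neg, Real.norm_of_nonneg (by unfold lodK; positivity)]
  unfold lodK
  rw [mul_one_div]
  have h1 : ((n : ℝ) + 1) ^ 2 ≤ (y + n + 1) ^ 2 := by gcongr; linarith
  have h2 : 1 ≤ (y + n) * (y + n + 2) := by nlinarith
  gcongr
  nlinarith [sq_nonneg ((n : ℝ) + 1)]

lemma bound_summable : Summable fun n : ℕ => 2 * (1 / ((n : ℝ) + 1) ^ 2) := by
  have := (summable_nat_add_iff 1).2 (Real.summable_one_div_nat_pow (p := 2).2 (by norm_num))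
  simpa using this.mul_left 2

lemma lodK_summable {x : ℝ} (hx : 1 < x) : Summable fun n : ℕ => -lodK (x + n) :=
  Summable.of_norm_bounded bound_summable fun n => lodK_bound n hx

lemma lodF_deriv {x : ℝ} (hx : 1 < x) : HasDerivAt lodF (∑' n : ℕ, -lodK (x + n)) x := by
  have h := hasDerivAt_tsum_of_isPreconnected (g := fun (n : ℕ) y => lodG (y + n))
    (g' := fun (n : ℕ) y => -lodK (y + n)) (t := Set.Ioi 1) (y₀ := x) (y := x)
    bound_summable isOpen_Ioi isPreconnected_Ioi
    (fun n y hy => by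
      have hy' : (1 : ℝ) < y := hy
      exact (lodG_deriv (x := y + n) (by positivity)).comp_add_const y n)
    (fun n y hy => lodK_bound n hy) hx (lodF_hasSum (by linarith)).summable hx
  refine h.congr_of_eventuallyEq ?_
  filter_upwards [lt_mem_nhds hx] with y hy
  exact (lodF_hasSum (by linarith)).tsum_eq.symm

lemma tele_le {f k : ℝ → ℝ} (hf : Tendsto f atTop (𝓝 0)) {x s : ℝ}
    (h : ∀ n : ℕ, f (x + n) - f (x + n + 1) ≤ k (x + n))
    (hs : HasSum (fun n : ℕ => k (x + n)) s) : f x ≤ s := by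
  refine le_of_tendsto_of_tendsto' (tendsto_shift hf x) hs.tendsto_sum_nat fun N => ?_
  rw [← sum_tele]
  exact Finset.sum_le_sum fun n _ => h n

lemma inv_tend (a : ℝ) (k : ℕ) (hk : k ≠ 0) :
    Tendsto (fun x : ℝ => a / (x * (x + 1)) ^ k) atTop (𝓝 0) := by
  have : Tendsto (fun x : ℝ => x * (x + 1)) atTop atTop :=
    tendsto_id.atTop_mul_atTop₀ (tendsto_atTop_add_const_right _ _ tendsto_id)
  exact ((tendsto_pow_atTop hk).comp this).const_div_atTop a

lemma lodU_tendsto : Tendsto lodU atTop (𝓝 0) := by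
  have h := ((inv_tend (1/3) 1 (by norm_num)).sub (inv_tend (1/15) 2 (by norm_num))).add
    (inv_tend (8/315) 3 (by norm_num))
  simp only [sub_zero, add_zero, pow_one] at h
  exact h

lemma lodV_tendsto (c : ℝ) : Tendsto (lodV c) atTop (𝓝 0) := by
  have h := ((inv_tend (1/3) 1 (by norm_num)).sub (inv_tend (2/15) 2 (by norm_num))).add
    (inv_tend c 3 (by norm_num))
  have h2 : Tendsto (fun x : ℝ => 1 / x + 1 / (x + 1)) atTop (𝓝 0) := by
    have a := (tendsto_id (α := ℝ) (x := atTop)).const_div_atTop 1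
    have b := (tendsto_atTop_add_const_right atTop (1 : ℝ) tendsto_id).const_div_atTop 1
    simpa using a.add b
  have h3 := h2.mul h
  simp only [sub_zero, add_zero, mul_zero] at h3
  refine h3.congr' ?_
  filter_upwards [eventually_gt_atTop 0] with x hx
  unfold lodV
  field_simp
  ring

lemma lodU_deriv {x : ℝ} (hx : 0 < x) : HasDerivAt lodU (-lodV (8 / 105) x) x := by
  have hm : HasDerivAt (fun x : ℝ => x * (x + 1)) (1 * (x + 1) + x * 1) x :=
    (hasDerivAt_id x).mul ((hasDerivAt_id x).add_const 1)
  have hne : x * (x + 1) ≠ 0 := by positivity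
  have h1 := (hasDerivAt_const x (1 / 3 : ℝ)).div hm hne
  have h2 := (hasDerivAt_const x (1 / 15 : ℝ)).div (hm.pow 2) (pow_ne_zero 2 hne)
  have h3 := (hasDerivAt_const x (8 / 315 : ℝ)).div (hm.pow 3) (pow_ne_zero 3 hne)
  refine ((h1.sub h2).add h3).congr_deriv ?_
  unfold lodV
  simp only [Pi.pow_apply]
  field_simp
  ring

lemma lodV_diff (c : ℝ) {x : ℝ} (hx : 0 < x) : lodV c x - lodV c (x + 1) - lodK x =
    ((2 * x + 1) * (1 / 3 * (x * (x + 1)) ^ 2 - 2 / 15 * (x * (x + 1)) + c) * (x + 2) ^ 4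
      - (2 * x + 3) * (1 / 3 * ((x + 1) * (x + 2)) ^ 2 - 2 / 15 * ((x + 1) * (x + 2)) + c) * x ^ 4
      - 2 * (x + 1) ^ 2 * (x * (x + 2)) ^ 3) / (x * (x + 1) * (x + 2)) ^ 4 := by
  unfold lodV lodK
  rw [show x + 1 + 1 = x + 2 by ring]
  field_simp
  ring

lemma lodV_upper {x : ℝ} (hx : 0 < x) : lodK x ≤ lodV (8 / 105) x - lodV (8 / 105) (x + 1) := by
  rw [← sub_nonneg, lodV_diff _ hx]
  apply div_nonneg _ (by positivity)
  have : 0 ≤ 48 / 35 * (x + 1) ^ 2 - 16 / 105 := by nlinarith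
  refine this.trans_eq ?_
  ring

lemma lodV_lower {x : ℝ} (hx : 28 < x) : lodV (7 / 100) x - lodV (7 / 100) (x + 1) ≤ lodK x := by
  rw [← sub_nonpos, lodV_diff _ (by linarith)]
  apply div_nonpos_of_nonpos_of_nonneg _ (by positivity)
  have h : 784 ≤ (x + 1) ^ 2 := by nlinarith
  have : - 7 / 50 + 101 / 75 * (x + 1) ^ 2 - 13 / 150 * ((x + 1) ^ 2) ^ 2 ≤ 0 := by nlinarith
  refine Eq.trans_le ?_ this
  ring

lemma nonneg_of_deriv {f f' : ℝ → ℝ} (hf : ∀ y, 1 < y → HasDerivAt f (f' y) y)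
    (h' : ∀ y, 1 < y → f' y ≤ 0) (h0 : Tendsto f atTop (𝓝 0)) {x : ℝ} (hx : 1 < x) : 0 ≤ f x := by
  have anti : AntitoneOn f (Set.Ioi 1) := by
    apply antitoneOn_of_deriv_nonpos (convex_Ioi 1)
    · exact fun y hy => (hf y hy).continuousAt.continuousWithinAt
    · rw [interior_Ioi]
      exact fun y hy => (hf y hy).differentiableAt.differentiableWithinAt
    · rw [interior_Ioi]
      intro y hy
      rw [(hf y hy).deriv]
      exact h' y hy
  refine le_of_tendsto h0 ?_
  filter_upwards [eventually_ge_atTop x] with y hy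
  exact anti hx (lt_of_lt_of_le hx hy) hy

lemma lodF_le {x : ℝ} (hx : 1 < x) : lodF x ≤ lodU x := by
  have h0 : Tendsto (fun y => lodU y - lodF y) atTop (𝓝 0) := by
    simpa using lodU_tendsto.sub lodF_tendsto
  have := nonneg_of_deriv (fun y hy => (lodU_deriv (by linarith)).sub (lodF_deriv hy)) ?_ h0 hx
  · simp only [Pi.sub_apply] at this
    linarith
  · intro y hy
    have hs := (lodK_summable hy).hasSum
    have h := tele_le (f := fun x => -lodV (8 / 105) x) (k := fun x => -lodK x) (x := y)
      (by simpa using (lodV_tendsto (8 / 105)).neg) (fun n => ?_) hs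
    · linarith
    · have := lodV_upper (x := y + n) (by positivity)
      linarith

lemma lodF_pos {x : ℝ} (hx : 1 < x) : 0 < lodF x := by
  have h := lodF_hasSum (x := x) (by linarith)
  rw [← h.tsum_eq]
  have nn : ∀ n : ℕ, 0 ≤ lodG (x + n) := fun n => lodG_nonneg (by positivity)
  by_contra hcon
  have hz : ∀ y, 1 < y → 0 ≤ lodF y := fun y hy =>
    (lodF_hasSum (by linarith)).nonneg fun n => lodG_nonneg (by positivity)
  have hx0 : lodF x = 0 := le_antisymm (by rw [← h.tsum_eq]; exact not_lt.1 hcon) (hz x hx)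
  have hmin : IsLocalMin lodF x := by
    filter_upwards [lt_mem_nhds hx] with y hy
    rw [hx0]; exact hz y hy
  have hd := hmin.hasDerivAt_eq_zero (lodF_deriv hx)
  rw [tsum_neg, neg_eq_zero] at hd
  have hp : ∀ n : ℕ, 0 < lodK (x + n) := fun n => by unfold lodK; positivity
  have hs : Summable fun n : ℕ => lodK (x + n) := by simpa using (lodK_summable hx).neg
  have := hs.tsum_pos (fun n => (hp n).le) 0 (hp 0)
  linarith

theorem lodgeLambda_deriv_pos (x : ℝ) (hx : 28 < x) : 0 < deriv lodgeLambda x := by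
  have hx1 : 1 < x := by linarith
  have hx0 : 0 < x := by linarith
  have hF := lodF_pos hx1
  have hU := lodF_le hx1
  have hd := lodF_deriv hx1
  have hs : HasSum (fun n : ℕ => lodK (x + n)) (∑' n : ℕ, lodK (x + n)) := by
    have : Summable fun n : ℕ => lodK (x + n) := by simpa using (lodK_summable hx1).neg
    exact this.hasSum
  have hV := tele_le (lodV_tendsto (7 / 100)) (fun n => lodV_lower (x := x + n)
    (by have : (0 : ℝ) ≤ n := Nat.cast_nonneg n
        linarith)) hs
  rw [tsum_neg] at hd
  set s := ∑' n : ℕ, lodK (x + n) with hsdef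
  have h1 : HasDerivAt lodgeLambda (s / lodF x ^ 2 - 3 * (2 * x + 1)) x := by
    have a := (hasDerivAt_const x (1 : ℝ)).div hd hF.ne'
    have b := ((hasDerivAt_id x).const_mul 3).mul ((hasDerivAt_id x).add_const 1)
    refine (a.sub b).congr_deriv ?_
    simp only [id]
    ring
  rw [h1.deriv, sub_pos, lt_div_iff₀ (by positivity)]
  have h2 : lodF x ^ 2 ≤ lodU x ^ 2 := by gcongr
  have h3 : 3 * lodU x ^ 2 < 1 / 3 / (x * (x + 1)) ^ 2 - 2 / 15 / (x * (x + 1)) ^ 3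
      + 7 / 100 / (x * (x + 1)) ^ 4 := by
    unfold lodU
    have hM : 812 < x * (x + 1) := by nlinarith
    set M := x * (x + 1)
    have hM0 : 0 < M := by linarith
    rw [← sub_pos]
    have e : 1 / 3 / M ^ 2 - 2 / 15 / M ^ 3 + 7 / 100 / M ^ 4
      - 3 * (1 / 3 / M - 1 / 15 / M ^ 2 + 8 / 315 / M ^ 3) ^ 2 =
      ((7 / 100 - 1 / 75 - 16 / 315) * M ^ 2 + 16 / 1575 * M - 64 / 33075) / M ^ 6 := by
      field_simp
      ring
    rw [e]
    apply div_pos _ (by positivity)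
    nlinarith
  calc 3 * (2 * x + 1) * lodF x ^ 2 ≤ (2 * x + 1) * (3 * lodU x ^ 2) := by nlinarith
    _ < lodV (7 / 100) x := by
      unfold lodV
      exact mul_lt_mul_of_pos_left h3 (by positivity)
    _ ≤ s := hV
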